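/- For every α > 0 and every B > 1 there exist constants C > 0 and c > 0 such that for every positive integer M there exist real coefficients c_k and real exponents s_k > 0, k = −M, …, M, with sup_{ρ ∈ [1,B]} | ρ^{−α} − Σ_{k=−M}^{M} c_k e^{−ρ s_k} | ≤ C e^{−c √M}. In particular, ρ^{−α} admits, uniformly on [1,B], an approximation by an exponential sum with 2M+1 terms whose error decays exponentially in √M. -/

import Mathlib

open Real

lemma stmt12_poly (α B : ℝ) (hB : 1 < B) :
    ∃ C a : ℝ, 0 < C ∧ 0 < a ∧ a < 1 ∧ ∀ M : ℕ, 0 < M → ∃ P : Polynomial ℝ, P.natDegree ≤ M ∧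
      ∀ ρ ∈ Set.Icc (1 : ℝ) B,
        |ρ ^ (-α) * Real.exp ρ - P.eval (Real.exp (-ρ))| ≤ C * a ^ M := by
  set f : ℂ → ℂ := fun z => (-Complex.log z) ^ (-(α : ℂ)) / z with hf
  have hd : DifferentiableOn ℂ f (Metric.ball (1/2 : ℂ) (1/2)) := by
    intro z hz
    have hz' : ‖z - 1/2‖ < 1/2 := by simpa [dist_eq_norm] using hz
    have hre : 0 < z.re := by
      have h1 := Complex.abs_re_le_norm (z - 1/2)
      have h2 := (abs_lt.1 (h1.trans_lt hz')).1
      have h3 : (z - 1/2).re = z.re - 1/2 := by simp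
      linarith
    have hn : ‖z‖ < 1 := by
      have h1 := norm_add_le (z - 1/2) (1/2)
      have h2 : ‖(1/2 : ℂ)‖ = 1/2 := by norm_num
      rw [sub_add_cancel, h2] at h1
      linarith
    have hz0 : z ≠ 0 := by rintro rfl; simp at hre
    have hs : z ∈ Complex.slitPlane := Or.inl hre
    have hs2 : -Complex.log z ∈ Complex.slitPlane := by
      left
      rw [Complex.neg_re, Complex.log_re]
      have := Real.log_neg (norm_pos_iff.2 hz0) hn
      linarith
    have h1 : DifferentiableAt ℂ f z := by
      refine DifferentiableAt.div ?_ differentiableAt_id hz0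
      exact DifferentiableAt.cpow (Complex.differentiableAt_log hs).neg
        (differentiableAt_const _) hs2
    exact h1.differentiableWithinAt
  -- radius
  set m := Real.exp (-B) with hm
  have hm0 : 0 < m := Real.exp_pos _
  have he1 : Real.exp (-1) < 1/2 := by
    have := Real.exp_neg_one_lt_d9; norm_num at this ⊢; linarith
  have hm1 : m < 1/2 := (Real.exp_lt_exp.2 (by linarith)).trans he1
  let R : NNReal := ⟨1/2 - m/4, by linarith⟩
  let r' : NNReal := ⟨1/2 - m/2, by linarith⟩
  have hR : (R : ℝ) = 1/2 - m/4 := rfl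
  have hr' : (r' : ℝ) = 1/2 - m/2 := rfl
  have hps := (hd.mono (Metric.closedBall_subset_ball
    (show (R : ℝ) < 1/2 by rw [hR]; linarith))).hasFPowerSeriesOnBall
      (R := R) (by rw [← NNReal.coe_pos, hR]; linarith)
  set p := cauchyPowerSeries f (1/2) R
  obtain ⟨a, ha, C, hC, hbd⟩ := hps.uniform_geometric_approx (r' := r')
    (by rw [ENNReal.coe_lt_coe, ← NNReal.coe_lt_coe, hR, hr']; linarith)
  refine ⟨C, a, hC, ha.1, ha.2, fun M hM => ?_⟩
  refine ⟨∑ k ∈ Finset.range M, Polynomial.C (p.coeff k).re *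
    (Polynomial.X - Polynomial.C (1/2 : ℝ)) ^ k, ?_, ?_⟩
  · refine Polynomial.natDegree_sum_le_of_forall_le _ _ fun k hk => ?_
    refine (Polynomial.natDegree_C_mul_le _ _).trans ?_
    refine Polynomial.natDegree_pow_le.trans ?_
    rw [Polynomial.natDegree_X_sub_C]
    have := Finset.mem_range.1 hk
    omega
  · intro ρ hρ
    set x := Real.exp (-ρ) with hx
    have hx1 : m ≤ x := Real.exp_le_exp.2 (by linarith [hρ.2])
    have hx2 : x ≤ Real.exp (-1) := Real.exp_le_exp.2 (by linarith [hρ.1])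
    have hx0 : 0 < x := Real.exp_pos _
    have hy : ((x - 1/2 : ℝ) : ℂ) ∈ Metric.ball (0 : ℂ) r' := by
      rw [mem_ball_zero_iff, Complex.norm_real, Real.norm_eq_abs, abs_lt, hr']
      constructor <;> linarith
    have hb := hbd _ hy M
    refine le_trans ?_ hb
    refine le_trans (le_of_eq ?_) (Complex.abs_re_le_norm _)
    congr 1
    rw [Complex.sub_re]
    congr 1
    · have e1 : (1/2 : ℂ) + ((x - 1/2 : ℝ) : ℂ) = (x : ℂ) := by push_cast; ring
      have e2 : -Complex.log (x : ℂ) = (ρ : ℂ) := by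
        rw [← Complex.ofReal_log hx0.le, hx, Real.log_exp]; push_cast; ring
      have e3 : f x = ((ρ ^ (-α) / x : ℝ) : ℂ) := by
        simp only [hf]
        rw [e2, Complex.ofReal_div, Complex.ofReal_cpow (by linarith [hρ.1])]
        push_cast; rfl
      rw [e1, e3, Complex.ofReal_re, hx, Real.exp_neg, div_inv_eq_mul]
    · rw [FormalMultilinearSeries.partialSum, Complex.re_sum, Polynomial.eval_finset_sum]
      refine Finset.sum_congr rfl fun k _ => ?_
      rw [FormalMultilinearSeries.apply_eq_pow_smul_coeff, ← Complex.ofReal_pow, smul_eq_mul,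
        Complex.re_ofReal_mul]
      simp [mul_comm]

/-- For every `α > 0` and `B > 1`, `ρ^{-α}` admits, uniformly on `[1,B]`, approximations
by exponential sums with `2M+1` terms and positive exponents whose error decays like
`C e^{-c √M}`. -/
theorem stmt12 (α B : ℝ) (hα : 0 < α) (hB : 1 < B) :
    ∃ C c : ℝ, 0 < C ∧ 0 < c ∧ ∀ M : ℕ, 0 < M →
      ∃ co s : ℤ → ℝ, (∀ k ∈ Finset.Icc (-(M : ℤ)) (M : ℤ), 0 < s k) ∧
        ∀ ρ ∈ Set.Icc (1 : ℝ) B,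
          |ρ ^ (-α) - ∑ k ∈ Finset.Icc (-(M : ℤ)) (M : ℤ), co k * Real.exp (-ρ * s k)| ≤
            C * Real.exp (-c * Real.sqrt M) := by
  obtain ⟨C, a, hC, ha0, ha1, h⟩ := stmt12_poly α B hB
  refine ⟨C, -Real.log a, hC, by linarith [Real.log_neg ha0 ha1], fun M hM => ?_⟩
  obtain ⟨P, hP, hb⟩ := h M hM
  refine ⟨fun k => if 0 ≤ k then P.coeff k.toNat else 0, fun k => |(k : ℝ)| + 1,
    fun k _ => by positivity, fun ρ hρ => ?_⟩
  have hsum : ∑ k ∈ Finset.Icc (-(M : ℤ)) (M : ℤ),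
      (if 0 ≤ k then P.coeff k.toNat else 0) * Real.exp (-ρ * (|(k : ℝ)| + 1))
      = Real.exp (-ρ) * P.eval (Real.exp (-ρ)) := by
    rw [Polynomial.eval_eq_sum_range' (Nat.lt_succ_of_le hP), Finset.mul_sum]
    symm
    refine Finset.sum_of_injOn (fun n : ℕ => (n : ℤ)) (fun _ _ _ _ h => by simpa using h) ?_ ?_ ?_
    · intro n hn
      simp at hn ⊢
      omega
    · intro k hk hk'
      have : ¬ 0 ≤ k := by
        intro h0
        apply hk'
        refine ⟨k.toNat, ?_, by simp [h0]⟩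
        simp at hk ⊢
        omega
      simp [this]
    · intro n hn
      have : Real.exp (-ρ * (|((n : ℤ) : ℝ)| + 1)) = Real.exp (-ρ) ^ n * Real.exp (-ρ) := by
        rw [← Real.exp_nat_mul, ← Real.exp_add]
        congr 1
        simp
        ring
      rw [this]
      simp
      ring
  rw [hsum]
  have e1 : ρ ^ (-α) - Real.exp (-ρ) * P.eval (Real.exp (-ρ))
      = Real.exp (-ρ) * (ρ ^ (-α) * Real.exp ρ - P.eval (Real.exp (-ρ))) := by
    have : Real.exp (-ρ) * Real.exp ρ = 1 := by rw [← Real.exp_add]; simp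
    linear_combination (-(ρ ^ (-α))) * this
  rw [e1, abs_mul, abs_of_pos (Real.exp_pos _)]
  have e2 : Real.exp (-ρ) ≤ 1 := Real.exp_le_one_iff.2 (by linarith [hρ.1])
  have e3 : a ^ M ≤ Real.exp (-(-Real.log a) * Real.sqrt M) := by
    rw [← Real.exp_log (pow_pos ha0 M), Real.log_pow]
    apply Real.exp_le_exp.2
    have h1 : Real.sqrt M ≤ M := by
      rw [Real.sqrt_le_left (by positivity)]
      have : (1 : ℝ) ≤ M := by exact_mod_cast hM
      nlinarith
    nlinarith [Real.log_neg ha0 ha1]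
  calc _ ≤ 1 * (C * a ^ M) := mul_le_mul e2 (hb ρ hρ) (abs_nonneg _) zero_le_one
    _ ≤ _ := by rw [one_mul]; exact mul_le_mul_of_nonneg_left e3 hC.le
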